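/- For every ε̄ ∈ int(E), the invariancy set I_inv = {ε ∈ int(E) : π(ε) = π(ε̄)} is either a singleton or an open interval. -/

import Mathlib

open Matrix Set

noncomputable section

variable {n m : ℕ}

/-- Feasibility for the primal SDO problem `(P_ε)` (the feasible set does not depend on `ε`). -/
def PrimalFeasible (A : Fin m → Matrix (Fin n) (Fin n) ℝ) (b : Fin m → ℝ)
    (X : Matrix (Fin n) (Fin n) ℝ) : Prop :=
  X.IsSymm ∧ (∀ i, ((A i) * X).trace = b i) ∧ X.PosSemidef

/-- Feasibility for the dual SDO problem `(D_ε)`. -/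
def DualFeasible (C Cbar : Matrix (Fin n) (Fin n) ℝ)
    (A : Fin m → Matrix (Fin n) (Fin n) ℝ) (ε : ℝ)
    (y : Fin m → ℝ) (S : Matrix (Fin n) (Fin n) ℝ) : Prop :=
  S.IsSymm ∧ (∑ i, y i • A i) + S = C + ε • Cbar ∧ S.PosSemidef

/-- The optimal value function `v(ε)` of `(P_ε)`, with values in `EReal`. -/
def vfun (C Cbar : Matrix (Fin n) (Fin n) ℝ) (A : Fin m → Matrix (Fin n) (Fin n) ℝ)
    (b : Fin m → ℝ) (ε : ℝ) : EReal :=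
  sInf ((fun X => (((C + ε • Cbar) * X).trace : EReal)) '' {X | PrimalFeasible A b X})

/-- `E = {ε : v(ε) > -∞}`. -/
def Eset (C Cbar : Matrix (Fin n) (Fin n) ℝ) (A : Fin m → Matrix (Fin n) (Fin n) ℝ)
    (b : Fin m → ℝ) : Set ℝ :=
  {ε | ⊥ < vfun C Cbar A b ε}

/-- The primal optimal set `P*(ε)`. -/
def PrimalOpt (C Cbar : Matrix (Fin n) (Fin n) ℝ) (A : Fin m → Matrix (Fin n) (Fin n) ℝ)
    (b : Fin m → ℝ) (ε : ℝ) : Set (Matrix (Fin n) (Fin n) ℝ) :=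
  {X | PrimalFeasible A b X ∧ ∀ X', PrimalFeasible A b X' →
    ((C + ε • Cbar) * X).trace ≤ ((C + ε • Cbar) * X').trace}

/-- The dual optimal set `D*(ε)`. -/
def DualOpt (C Cbar : Matrix (Fin n) (Fin n) ℝ) (A : Fin m → Matrix (Fin n) (Fin n) ℝ)
    (b : Fin m → ℝ) (ε : ℝ) : Set ((Fin m → ℝ) × Matrix (Fin n) (Fin n) ℝ) :=
  {p | DualFeasible C Cbar A ε p.1 p.2 ∧ ∀ y' S', DualFeasible C Cbar A ε y' S' →
    ∑ i, b i * y' i ≤ ∑ i, b i * p.1 i}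

/-- A maximally complementary optimal solution: `X` lies in the relative interior of `P*(ε)`
and `(y, S)` in the relative interior of `D*(ε)`. -/
def MaxComp (C Cbar : Matrix (Fin n) (Fin n) ℝ) (A : Fin m → Matrix (Fin n) (Fin n) ℝ)
    (b : Fin m → ℝ) (ε : ℝ) (X : Matrix (Fin n) (Fin n) ℝ) (y : Fin m → ℝ)
    (S : Matrix (Fin n) (Fin n) ℝ) : Prop :=
  X ∈ intrinsicInterior ℝ (PrimalOpt C Cbar A b ε) ∧
    (y, S) ∈ intrinsicInterior ℝ (DualOpt C Cbar A b ε)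

/-- `π(ε) = π(ε')`: the optimal partitions at `ε` and `ε'` coincide, expressed through
maximally complementary solutions (`B = range X*`, `N = range S*`, `T` being determined
by `B` and `N`). -/
def SamePartition (C Cbar : Matrix (Fin n) (Fin n) ℝ) (A : Fin m → Matrix (Fin n) (Fin n) ℝ)
    (b : Fin m → ℝ) (ε ε' : ℝ) : Prop :=
  ∃ X y S X' y' S', MaxComp C Cbar A b ε X y S ∧ MaxComp C Cbar A b ε' X' y' S' ∧
    LinearMap.range X.mulVecLin = LinearMap.range X'.mulVecLin ∧
    LinearMap.range S.mulVecLin = LinearMap.range S'.mulVecLin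

/-- The standing assumptions: symmetric data, linearly independent constraint matrices and
the interior point condition at `ε = 0`. -/
def StandingAssumptions (C Cbar : Matrix (Fin n) (Fin n) ℝ)
    (A : Fin m → Matrix (Fin n) (Fin n) ℝ) (b : Fin m → ℝ) : Prop :=
  C.IsSymm ∧ Cbar.IsSymm ∧ (∀ i, (A i).IsSymm) ∧ LinearIndependent ℝ A ∧
    ∃ X y S, PrimalFeasible A b X ∧ X.PosDef ∧ DualFeasible C Cbar A 0 y S ∧ S.PosDef

/-- The invariancy set of `ε̄`. -/
def InvSet (C Cbar : Matrix (Fin n) (Fin n) ℝ) (A : Fin m → Matrix (Fin n) (Fin n) ℝ)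
    (b : Fin m → ℝ) (εbar : ℝ) : Set ℝ :=
  {ε | ε ∈ interior (Eset C Cbar A b) ∧ SamePartition C Cbar A b ε εbar}

/-- `dim B(ε) = dim B(ε')` and `dim N(ε) = dim N(ε')`, expressed through maximally
complementary solutions. -/
def DimsMatch (C Cbar : Matrix (Fin n) (Fin n) ℝ) (A : Fin m → Matrix (Fin n) (Fin n) ℝ)
    (b : Fin m → ℝ) (ε ε' : ℝ) : Prop :=
  ∀ X y S X' y' S', MaxComp C Cbar A b ε X y S → MaxComp C Cbar A b ε' X' y' S' →
    Module.finrank ℝ (LinearMap.range X.mulVecLin) =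
        Module.finrank ℝ (LinearMap.range X'.mulVecLin) ∧
      Module.finrank ℝ (LinearMap.range S.mulVecLin) =
        Module.finrank ℝ (LinearMap.range S'.mulVecLin)

/-- A transition point: a singleton invariancy set such that every neighborhood contains a
parameter at which `dim B` or `dim N` differs. -/
def IsTransitionPoint (C Cbar : Matrix (Fin n) (Fin n) ℝ) (A : Fin m → Matrix (Fin n) (Fin n) ℝ)
    (b : Fin m → ℝ) (εbar : ℝ) : Prop :=
  εbar ∈ interior (Eset C Cbar A b) ∧
    (∀ ε ∈ interior (Eset C Cbar A b), ε ≠ εbar → ¬ SamePartition C Cbar A b ε εbar) ∧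
    ∀ ξ : ℝ, 0 < ξ → ∃ ε ∈ Set.Ioo (εbar - ξ) (εbar + ξ) ∩ interior (Eset C Cbar A b),
      ¬ DimsMatch C Cbar A b ε εbar

/-- Existence of a strictly complementary optimal solution at `ε`. -/
def HasStrictComp (C Cbar : Matrix (Fin n) (Fin n) ℝ) (A : Fin m → Matrix (Fin n) (Fin n) ℝ)
    (b : Fin m → ℝ) (ε : ℝ) : Prop :=
  ∃ X y S, X ∈ PrimalOpt C Cbar A b ε ∧ (y, S) ∈ DualOpt C Cbar A b ε ∧ (X + S).PosDef

/-- Nonsingularity of the Jacobian `J(X, y, S)` of the optimality system, as a linear map on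
`S^n × ℝ^m × S^n`: only the trivial symmetric triple is mapped to zero. -/
def JNonsingular (A : Fin m → Matrix (Fin n) (Fin n) ℝ)
    (X S : Matrix (Fin n) (Fin n) ℝ) : Prop :=
  ∀ (DX DS : Matrix (Fin n) (Fin n) ℝ) (Dy : Fin m → ℝ), DX.IsSymm → DS.IsSymm →
    (∀ i, ((A i) * DX).trace = 0) → ((∑ i, Dy i • A i) + DS = 0) →
    (DX * S + S * DX + X * DS + DS * X = 0) → DX = 0 ∧ Dy = 0 ∧ DS = 0

/-- Primal nondegeneracy of a primal feasible `X`. -/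
def PrimalNondeg (A : Fin m → Matrix (Fin n) (Fin n) ℝ)
    (X : Matrix (Fin n) (Fin n) ℝ) : Prop :=
  ∃ (r : ℕ) (M₁ : Matrix (Fin n) (Fin r) ℝ) (M₂ : Matrix (Fin n) (Fin (n - r)) ℝ),
    M₁ᵀ * M₁ = 1 ∧ M₂ᵀ * M₂ = 1 ∧ M₁ᵀ * M₂ = 0 ∧
    LinearMap.range M₁.mulVecLin = LinearMap.range X.mulVecLin ∧
    LinearIndependent ℝ (fun i =>
      Matrix.fromBlocks (M₁ᵀ * (A i) * M₁) (M₁ᵀ * (A i) * M₂) (M₂ᵀ * (A i) * M₁) 0)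

/-- Dual nondegeneracy of a dual feasible `(y, S)` (the condition involves only `S`). -/
def DualNondeg (A : Fin m → Matrix (Fin n) (Fin n) ℝ)
    (S : Matrix (Fin n) (Fin n) ℝ) : Prop :=
  ∃ (k : ℕ) (N₁ : Matrix (Fin n) (Fin k) ℝ),
    N₁ᵀ * N₁ = 1 ∧ LinearMap.range N₁.mulVecLin = LinearMap.ker S.mulVecLin ∧
    ∀ W : Matrix (Fin k) (Fin k) ℝ, W.IsSymm →
      W ∈ Submodule.span ℝ (Set.range fun i => N₁ᵀ * (A i) * N₁)

/-- A central solution with parameter `μ` for the problems `(P_ε)` and `(D_ε)`. -/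
def CentralSol (C Cbar : Matrix (Fin n) (Fin n) ℝ) (A : Fin m → Matrix (Fin n) (Fin n) ℝ)
    (b : Fin m → ℝ) (ε μ : ℝ) (X : Matrix (Fin n) (Fin n) ℝ) (y : Fin m → ℝ)
    (S : Matrix (Fin n) (Fin n) ℝ) : Prop :=
  PrimalFeasible A b X ∧ DualFeasible C Cbar A ε y S ∧
    X * S = μ • (1 : Matrix (Fin n) (Fin n) ℝ)

/-- The Frobenius norm of a matrix. -/
def frobNorm {α β : Type*} [Fintype α] [Fintype β] (M : Matrix α β ℝ) : ℝ :=
  Real.sqrt (∑ i, ∑ j, (M i j) ^ 2)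

/-- The spectral norm (induced 2-norm) of a square matrix. -/
def specNorm {N : ℕ} (M : Matrix (Fin N) (Fin N) ℝ) : ℝ :=
  ‖LinearMap.toContinuousLinearMap (Matrix.toEuclideanLin M)‖

/-- The smallest eigenvalue of a symmetric matrix, via the Rayleigh quotient. -/
def lamMin {k : ℕ} (M : Matrix (Fin k) (Fin k) ℝ) : ℝ :=
  sInf {r : ℝ | ∃ x : Fin k → ℝ, (∑ i, (x i) ^ 2) = 1 ∧ r = x ⬝ᵥ M.mulVec x}

/-- `θ^μ`: the operator norm of the inverse of the Jacobian `J(X, y, S)` on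
`S^n × ℝ^m × S^n`, characterized as the least constant `t ≥ 0` with
`‖(ΔX, Δy, ΔS)‖ ≤ t * ‖J(X,y,S)(ΔX, Δy, ΔS)‖` for all symmetric `ΔX`, `ΔS`. -/
def thetaMu (A : Fin m → Matrix (Fin n) (Fin n) ℝ)
    (X S : Matrix (Fin n) (Fin n) ℝ) : ℝ :=
  sInf {t : ℝ | 0 ≤ t ∧ ∀ (DX DS : Matrix (Fin n) (Fin n) ℝ) (Dy : Fin m → ℝ),
    DX.IsSymm → DS.IsSymm →
    Real.sqrt (frobNorm DX ^ 2 + (∑ i, (Dy i) ^ 2) + frobNorm DS ^ 2) ≤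
      t * Real.sqrt ((∑ i, (((A i) * DX).trace) ^ 2) +
        frobNorm ((∑ i, Dy i • A i) + DS) ^ 2 +
        frobNorm ((1 / 2 : ℝ) • (DX * S + S * DX + X * DS + DS * X)) ^ 2)}

/-- A nonlinearity interval: a non-singleton open subinterval of `int(E)`, of maximal length,
on which `dim B(·)` and `dim N(·)` are constant while the optimal partition `π(·)` varies. -/
def IsNonlinearityInterval (C Cbar : Matrix (Fin n) (Fin n) ℝ)
    (A : Fin m → Matrix (Fin n) (Fin n) ℝ) (b : Fin m → ℝ) (I : Set ℝ) : Prop :=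
  I ⊆ interior (Eset C Cbar A b) ∧ IsOpen I ∧ I.OrdConnected ∧
    (∃ a ∈ I, ∃ c ∈ I, a ≠ c) ∧
    (∀ ε ∈ I, ∀ ε' ∈ I, DimsMatch C Cbar A b ε ε') ∧
    ¬ (∀ ε ∈ I, ∀ ε' ∈ I, SamePartition C Cbar A b ε ε') ∧
    ∀ I' : Set ℝ, I ⊆ I' → I' ⊆ interior (Eset C Cbar A b) → IsOpen I' → I'.OrdConnected →
      (∀ ε ∈ I', ∀ ε' ∈ I', DimsMatch C Cbar A b ε ε') → I' = I

end

/-!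
Kernels of positive semidefinite matrices control everything. Strict feasibility yields strong
duality (M. Riesz extension of a positive functional), so optimality amounts to `S * X = 0`, a
condition on `X` that depends on `S` only through `ker S`. Hence if `X`, `S` are maximally
complementary at `ε̄`, the invariancy set of `ε̄` is `int(E) ∩ K`, where `K` is the set of
parameters carrying a dual feasible slack matrix with kernel exactly `ker S`.

`K` is convex, because the kernel of a positive combination of positive semidefinite matrices is
the intersection of the kernels. It is also open unless it has at most one point: if slack
matrices `S` at `ε` and `S'` at `ε'` have the same kernel, then `c • S - S'` is positive
semidefinite for some `c > 0`, so the segment from `ε'` to `ε` can be prolonged beyond `ε`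
inside `K`.
-/

section ConicDuality

variable {E V Z : Type*} [AddCommGroup E] [Module ℝ E] [AddCommGroup V] [Module ℝ V]
  [AddCommGroup Z] [Module ℝ Z] {K : PointedCone ℝ E}

/-- Order units of the preorder induced by a convex cone: the algebraic form of Slater's
condition, for which no topology on `E` is needed. -/
def IsConeOrderUnit (K : PointedCone ℝ E) (e : E) : Prop :=
  e ∈ K ∧ ∀ x, ∃ t : ℝ, t • e + x ∈ K

lemma exists_linearMap_comp_eq_of_ker_le {𝕜 : Type*} [DivisionRing 𝕜] {E F G : Type*}
    [AddCommGroup E] [Module 𝕜 E] [AddCommGroup F] [Module 𝕜 F] [AddCommGroup G] [Module 𝕜 G]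
    {f : E →ₗ[𝕜] F} {g : E →ₗ[𝕜] G} (h : LinearMap.ker f ≤ LinearMap.ker g) :
    ∃ k : F →ₗ[𝕜] G, k ∘ₗ f = g := by
  obtain ⟨k, hk⟩ :=
    ((LinearMap.ker f).liftQ g h ∘ₗ f.quotKerEquivRange.symm.toLinearMap).exists_extend
  refine ⟨k, LinearMap.ext fun x => ?_⟩
  have hkx := LinearMap.congr_fun hk (f.rangeRestrict x)
  have hx : f.quotKerEquivRange.symm (f.rangeRestrict x) = Submodule.Quotient.mk x :=
    f.quotKerEquivRange_symm_apply_image x (f.rangeRestrict x).2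
  simpa [hx] using hkx

lemma exists_nonneg_comp_eq_of_isConeOrderUnit {Q : Z →ₗ[ℝ] E} {ψ : Z →ₗ[ℝ] ℝ} {z₀ : Z}
    (hz₀ : IsConeOrderUnit K (Q z₀)) (hψ : ∀ z, Q z ∈ K → 0 ≤ ψ z) :
    ∃ g : E →ₗ[ℝ] ℝ, (∀ x ∈ K, 0 ≤ g x) ∧ g ∘ₗ Q = ψ := by
  have hker : LinearMap.ker Q ≤ LinearMap.ker ψ := fun z hz => by
    have hpos : 0 ≤ ψ z := hψ z (by rw [LinearMap.mem_ker.1 hz]; exact K.zero_mem)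
    have hneg : 0 ≤ ψ (-z) := hψ (-z) (by simp [LinearMap.mem_ker.1 hz])
    rw [map_neg] at hneg
    exact LinearMap.mem_ker.2 (by linarith)
  obtain ⟨f, rfl⟩ := exists_linearMap_comp_eq_of_ker_le hker
  obtain ⟨g, hgf, hgK⟩ := riesz_extension K ⟨LinearMap.range Q, f ∘ₗ (LinearMap.range Q).subtype⟩
    (by rintro ⟨_, z, rfl⟩ hz; exact hψ z hz)
    (fun x => by
      obtain ⟨t, ht⟩ := hz₀.2 x
      exact ⟨⟨t • Q z₀, t • z₀, map_smul Q t z₀⟩, ht⟩)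
  exact ⟨g, hgK, LinearMap.ext fun z => hgf ⟨Q z, z, rfl⟩⟩

variable {T : V →ₗ[ℝ] E} {φ : V →ₗ[ℝ] ℝ} {p : E} {w : ℝ}

lemma nonpos_of_map_mem_of_bddAbove {v₀ v : V} (hv₀ : p + T v₀ ∈ K)
    (hbdd : BddAbove (φ '' {v | p + T v ∈ K})) (hv : T v ∈ K) : φ v ≤ 0 := by
  obtain ⟨w, hw⟩ := hbdd
  by_contra! hpos
  obtain ⟨k, hk⟩ := exists_nat_gt ((w - φ v₀) / φ v)
  have hmem : p + T (v₀ + (k : ℝ) • v) ∈ K := by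
    have : p + T (v₀ + (k : ℝ) • v) = (p + T v₀) + (k : ℝ) • T v := by
      rw [map_add, map_smul, add_assoc]
    exact this ▸ K.add_mem hv₀ (K.smul_mem k.cast_nonneg hv)
  have hle : φ (v₀ + (k : ℝ) • v) ≤ w := hw ⟨_, hmem, rfl⟩
  rw [map_add, map_smul, smul_eq_mul] at hle
  rw [div_lt_iff₀ hpos] at hk
  linarith

lemma le_mul_of_smul_add_map_mem {v₀ : V} (hv₀ : p + T v₀ ∈ K)
    (hw : IsLUB (φ '' {v | p + T v ∈ K}) w) {s : ℝ} {v : V} (hsv : s • p + T v ∈ K) :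
    φ v ≤ s * w := by
  rcases lt_trichotomy s 0 with hs | rfl | hs
  · have hu : ∀ u, p + T u ∈ K → φ u ≤ φ v / s := fun u hu => by
      have hmem : T (v + (-s) • u) ∈ K := by
        have : T (v + (-s) • u) = (s • p + T v) + (-s) • (p + T u) := by
          rw [map_add, map_smul]; module
        exact this ▸ K.add_mem hsv (K.smul_mem (neg_nonneg.2 hs.le) hu)
      have hle := nonpos_of_map_mem_of_bddAbove hv₀ hw.bddAbove hmem
      rw [map_add, map_smul, smul_eq_mul] at hle
      rw [le_div_iff_of_neg hs]
      linarith
    have hws : w ≤ φ v / s := (isLUB_le_iff hw).2 (by rintro _ ⟨u, hmem, rfl⟩; exact hu u hmem)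
    rw [le_div_iff_of_neg hs] at hws
    linarith
  · rw [zero_mul]
    exact nonpos_of_map_mem_of_bddAbove hv₀ hw.bddAbove (by simpa using hsv)
  · have hmem : p + T (s⁻¹ • v) ∈ K := by
      have : p + T (s⁻¹ • v) = s⁻¹ • (s • p + T v) := by
        rw [map_smul, smul_add, inv_smul_smul₀ hs.ne']
      exact this ▸ K.smul_mem (inv_nonneg.2 hs.le) hsv
    have hle : φ (s⁻¹ • v) ≤ w := hw.1 ⟨_, hmem, rfl⟩
    rwa [map_smul, smul_eq_mul, inv_mul_le_iff₀ hs] at hle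

lemma exists_nonneg_comp_eq_neg_of_isLUB {v₀ : V}
    (hv₀ : IsConeOrderUnit K (p + T v₀)) (hw : IsLUB (φ '' {v | p + T v ∈ K}) w) :
    ∃ g : E →ₗ[ℝ] ℝ, (∀ x ∈ K, 0 ≤ g x) ∧ g ∘ₗ T = -φ ∧ g p = w := by
  let Q : ℝ × V →ₗ[ℝ] E := (LinearMap.toSpanSingleton ℝ E p).coprod T
  let ψ : ℝ × V →ₗ[ℝ] ℝ := (LinearMap.toSpanSingleton ℝ ℝ w).coprod (-φ)
  have hψ : ∀ z, Q z ∈ K → 0 ≤ ψ z := fun ⟨s, v⟩ hz => by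
    have := le_mul_of_smul_add_map_mem hv₀.1 hw (s := s) (v := v) (by simpa [Q] using hz)
    simpa [ψ] using this
  obtain ⟨g, hgK, hgQ⟩ :=
    exists_nonneg_comp_eq_of_isConeOrderUnit (z₀ := ((1 : ℝ), v₀)) (by simpa [Q] using hv₀) hψ
  refine ⟨g, hgK, LinearMap.ext fun v => ?_, ?_⟩
  · simpa [Q, ψ] using LinearMap.congr_fun hgQ (0, v)
  · simpa [Q, ψ] using LinearMap.congr_fun hgQ (1, 0)

lemma exists_sub_sum_nonneg_of_isGLB {ι : Type*} [Fintype ι] {L : ι → E →ₗ[ℝ] ℝ} {d : E →ₗ[ℝ] ℝ}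
    {x₀ : E} (hx₀ : IsConeOrderUnit K x₀) (hw : IsGLB (d '' {x ∈ K | ∀ i, L i x = L i x₀}) w) :
    ∃ y : ι → ℝ, (∀ x ∈ K, 0 ≤ d x - ∑ i, y i * L i x) ∧ ∑ i, y i * L i x₀ = w := by
  let W : Submodule ℝ E := ⨅ i, LinearMap.ker (L i)
  have hW : ∀ v, v ∈ W ↔ ∀ i, L i v = 0 := fun v => by
    simp only [W, Submodule.mem_iInf, LinearMap.mem_ker]
  have hlub : IsLUB ((-(d ∘ₗ W.subtype)) '' {v | x₀ + W.subtype v ∈ K}) (d x₀ - w) := by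
    refine ⟨?_, fun u hu => ?_⟩
    · rintro _ ⟨v, hv, rfl⟩
      have := hw.1 ⟨x₀ + v, ⟨hv, fun i => by rw [map_add, (hW v).1 v.2 i, add_zero]⟩, rfl⟩
      simp only [LinearMap.neg_apply, LinearMap.comp_apply, Submodule.subtype_apply]
      rw [map_add] at this
      linarith
    · rw [sub_le_comm]
      refine hw.2 ?_
      rintro _ ⟨x, ⟨hx, hL⟩, rfl⟩
      have := hu ⟨⟨x - x₀, (hW _).2 fun i => by rw [map_sub, hL, sub_self]⟩,
        by simpa using hx, rfl⟩
      simp only [LinearMap.neg_apply, LinearMap.comp_apply, Submodule.subtype_apply,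
        map_sub] at this
      linarith
  obtain ⟨g, hgK, hgW, hgx₀⟩ :=
    exists_nonneg_comp_eq_neg_of_isLUB (v₀ := 0) (by simpa using hx₀) hlub
  have hspan : d - g ∈ Submodule.span ℝ (Set.range L) :=
    mem_span_of_iInf_ker_le_ker fun v hv => by
      have := LinearMap.congr_fun hgW ⟨v, hv⟩
      rw [LinearMap.mem_ker, LinearMap.sub_apply, sub_eq_zero]
      simpa using this.symm
  obtain ⟨y, hy⟩ := (Submodule.mem_span_range_iff_exists_fun ℝ).1 hspan
  have hg : ∀ x, ∑ i, y i * L i x = d x - g x := fun x => by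
    simpa using LinearMap.congr_fun hy x
  exact ⟨y, fun x hx => by rw [hg, sub_sub_cancel]; exact hgK x hx,
    by rw [hg, hgx₀, sub_sub_cancel]⟩

end ConicDuality

section PosSemidef

variable {ι κ μ ν τ : Type*} [Fintype ι] [Fintype κ]

lemma posSemidef_iff_isSymm_and_dotProduct_nonneg {S : Matrix ι ι ℝ} :
    S.PosSemidef ↔ S.IsSymm ∧ ∀ x : ι → ℝ, 0 ≤ x ⬝ᵥ (S *ᵥ x) := by
  rw [posSemidef_iff_dotProduct_mulVec, IsHermitian, conjTranspose_eq_transpose_of_trivial,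
    IsSymm]
  simp only [star_trivial]

lemma exists_transpose_mul_self_eq_of_posSemidef {S : Matrix ι ι ℝ} (hS : S.PosSemidef) :
    ∃ R : Matrix ι ι ℝ, Rᵀ * R = S := by
  classical
  open scoped MatrixOrder Matrix.Norms.L2Operator in
  obtain ⟨R, hR⟩ := CStarAlgebra.nonneg_iff_eq_star_mul_self.mp hS.nonneg
  exact ⟨R, by rw [hR, star_eq_conjTranspose, conjTranspose_eq_transpose_of_trivial]⟩

lemma trace_mul_nonneg {S X : Matrix ι ι ℝ} (hS : S.PosSemidef) (hX : X.PosSemidef) :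
    0 ≤ (S * X).trace := by
  obtain ⟨R, rfl⟩ := exists_transpose_mul_self_eq_of_posSemidef hS
  have h := (hX.mul_mul_conjTranspose_same R).trace_nonneg
  rwa [conjTranspose_eq_transpose_of_trivial, trace_mul_comm, ← Matrix.mul_assoc] at h

lemma mul_eq_zero_of_trace_mul_eq_zero {S X : Matrix ι ι ℝ} (hS : S.PosSemidef)
    (hX : X.PosSemidef) (h : (S * X).trace = 0) : S * X = 0 := by
  obtain ⟨R, rfl⟩ := exists_transpose_mul_self_eq_of_posSemidef hS
  obtain ⟨Q, rfl⟩ := exists_transpose_mul_self_eq_of_posSemidef hX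
  have hRQ : R * Qᵀ = 0 := by
    rw [← trace_conjTranspose_mul_self_eq_zero_iff, ← h, conjTranspose_eq_transpose_of_trivial,
      transpose_mul, transpose_transpose, Matrix.mul_assoc, trace_mul_comm]
    simp only [Matrix.mul_assoc]
  calc Rᵀ * R * (Qᵀ * Q) = Rᵀ * (R * Qᵀ) * Q := by simp only [Matrix.mul_assoc]
    _ = 0 := by rw [hRQ, Matrix.mul_zero, Matrix.zero_mul]

lemma ker_mulVecLin_smul_add_le {P Q : Matrix ι ι ℝ} (hP : P.PosSemidef) (hQ : Q.PosSemidef)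
    {a : ℝ} (ha : 0 < a) :
    LinearMap.ker (a • P + Q).mulVecLin ≤ LinearMap.ker P.mulVecLin := fun v hv => by
  rw [LinearMap.mem_ker, mulVecLin_apply] at hv ⊢
  have hsum : a * (v ⬝ᵥ P *ᵥ v) + v ⬝ᵥ Q *ᵥ v = 0 := by
    rw [← smul_eq_mul, ← dotProduct_smul, ← smul_mulVec, ← dotProduct_add, ← add_mulVec, hv,
      dotProduct_zero]
  have hPv := (posSemidef_iff_isSymm_and_dotProduct_nonneg.1 hP).2 v
  have hQv := (posSemidef_iff_isSymm_and_dotProduct_nonneg.1 hQ).2 v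
  have hzero : v ⬝ᵥ P *ᵥ v = 0 := by nlinarith
  exact (hP.dotProduct_mulVec_zero_iff v).1 (by rwa [star_trivial])

lemma le_ker_mulVecLin_smul_add_smul {S T : Matrix μ ι ℝ} {W : Submodule ℝ (ι → ℝ)}
    (hS : W ≤ LinearMap.ker S.mulVecLin) (hT : W ≤ LinearMap.ker T.mulVecLin) (a c : ℝ) :
    W ≤ LinearMap.ker (a • S + c • T).mulVecLin := fun v hv => by
  have hSv : S *ᵥ v = 0 := hS hv
  have hTv : T *ᵥ v = 0 := hT hv
  rw [LinearMap.mem_ker, mulVecLin_apply, add_mulVec, smul_mulVec, smul_mulVec, hSv, hTv,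
    smul_zero, smul_zero, add_zero]

lemma exists_mul_eq_of_ker_mulVecLin_le {R : Matrix κ ι ℝ} {Q : Matrix μ ι ℝ}
    (h : LinearMap.ker R.mulVecLin ≤ LinearMap.ker Q.mulVecLin) :
    ∃ G : Matrix μ κ ℝ, G * R = Q := by
  classical
  obtain ⟨g, hg⟩ := exists_linearMap_comp_eq_of_ker_le h
  exact ⟨g.toMatrix', toLin'.injective (by rwa [toLin'_mul, toLin'_toMatrix'])⟩

lemma mul_eq_zero_of_ker_mulVecLin_le {S : Matrix μ ι ℝ} {T : Matrix ν ι ℝ} {X : Matrix ι τ ℝ}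
    (hker : LinearMap.ker S.mulVecLin ≤ LinearMap.ker T.mulVecLin) (hX : S * X = 0) :
    T * X = 0 := by
  ext i j
  have hcol : X.col j ∈ LinearMap.ker S.mulVecLin := funext fun k => congrFun₂ hX k j
  exact congrFun (hker hcol) i

lemma range_mulVecLin_le_of_ker_le {S T : Matrix ι ι ℝ} (hS : S.IsSymm) (hT : T.IsSymm)
    (h : LinearMap.ker S.mulVecLin ≤ LinearMap.ker T.mulVecLin) :
    LinearMap.range T.mulVecLin ≤ LinearMap.range S.mulVecLin := by
  obtain ⟨G, rfl⟩ := exists_mul_eq_of_ker_mulVecLin_le h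
  rw [← hT.eq, transpose_mul, hS.eq, mulVecLin_mul]
  exact LinearMap.range_comp_le_range _ _

lemma ker_mulVecLin_le_of_range_le {S T : Matrix ι ι ℝ} (hS : S.IsSymm) (hT : T.IsSymm)
    (h : LinearMap.range T.mulVecLin ≤ LinearMap.range S.mulVecLin) :
    LinearMap.ker S.mulVecLin ≤ LinearMap.ker T.mulVecLin := fun v hv => by
  obtain ⟨w, hw⟩ := h ⟨T *ᵥ v, rfl⟩
  rw [LinearMap.mem_ker, mulVecLin_apply] at hv ⊢
  rw [mulVecLin_apply, mulVecLin_apply] at hw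
  rw [← dotProduct_self_eq_zero]
  calc T *ᵥ v ⬝ᵥ T *ᵥ v = v ⬝ᵥ T *ᵥ T *ᵥ v := by
        rw [dotProduct_mulVec v, ← mulVec_transpose, hT.eq]
    _ = S *ᵥ v ⬝ᵥ w := by rw [← hw, dotProduct_mulVec v, ← mulVec_transpose, hS.eq]
    _ = 0 := by rw [hv, zero_dotProduct]

lemma range_mulVecLin_eq_iff_ker_eq {S T : Matrix ι ι ℝ} (hS : S.IsSymm) (hT : T.IsSymm) :
    LinearMap.range S.mulVecLin = LinearMap.range T.mulVecLin ↔
      LinearMap.ker S.mulVecLin = LinearMap.ker T.mulVecLin :=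
  ⟨fun h => (ker_mulVecLin_le_of_range_le hS hT h.ge).antisymm
      (ker_mulVecLin_le_of_range_le hT hS h.le),
    fun h => (range_mulVecLin_le_of_ker_le hT hS h.ge).antisymm
      (range_mulVecLin_le_of_ker_le hS hT h.le)⟩

lemma dotProduct_mulVec_self_le (G : Matrix κ ι ℝ) (w : ι → ℝ) :
    G *ᵥ w ⬝ᵥ G *ᵥ w ≤ (∑ k, ∑ i, G k i ^ 2) * (w ⬝ᵥ w) := by
  simp only [dotProduct, ← sq]
  rw [Finset.sum_mul]
  exact Finset.sum_le_sum fun k _ =>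
    Finset.sum_mul_sq_le_sq_mul_sq Finset.univ (fun i => G k i) w

lemma dotProduct_transpose_mul_self_mulVec (R : Matrix κ ι ℝ) (v : ι → ℝ) :
    v ⬝ᵥ (Rᵀ * R) *ᵥ v = R *ᵥ v ⬝ᵥ R *ᵥ v := by
  rw [← mulVec_mulVec, dotProduct_mulVec, vecMul_transpose]

lemma exists_pos_smul_sub_posSemidef_of_ker_le {S T : Matrix ι ι ℝ} (hS : S.PosSemidef)
    (hT : T.PosSemidef) (h : LinearMap.ker S.mulVecLin ≤ LinearMap.ker T.mulVecLin) :
    ∃ c : ℝ, 0 < c ∧ (c • S - T).PosSemidef := by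
  obtain ⟨R, rfl⟩ := exists_transpose_mul_self_eq_of_posSemidef hS
  obtain ⟨Q, rfl⟩ := exists_transpose_mul_self_eq_of_posSemidef hT
  rw [ker_mulVecLin_transpose_mul_self, ker_mulVecLin_transpose_mul_self] at h
  obtain ⟨G, rfl⟩ := exists_mul_eq_of_ker_mulVecLin_le h
  refine ⟨(∑ k, ∑ i, G k i ^ 2) + 1, by positivity,
    posSemidef_iff_isSymm_and_dotProduct_nonneg.2
      ⟨((isSymm_transpose_mul_self R).smul _).sub (isSymm_transpose_mul_self _), fun v => ?_⟩⟩
  rw [sub_mulVec, smul_mulVec, dotProduct_sub, dotProduct_smul,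
    dotProduct_transpose_mul_self_mulVec, dotProduct_transpose_mul_self_mulVec, smul_eq_mul,
    ← mulVec_mulVec]
  have hG := dotProduct_mulVec_self_le G (R *ᵥ v)
  have hR : 0 ≤ R *ᵥ v ⬝ᵥ R *ᵥ v := Finset.sum_nonneg fun i _ => mul_self_nonneg _
  linarith

end PosSemidef

section AccretiveCone

variable {ι : Type*} [Fintype ι]

/-- The matrices with nonnegative quadratic form, symmetric or not. Working with them instead of
with the positive semidefinite ones lets the duality theory run on the space of all matrices: a
functional that is nonnegative on this cone automatically vanishes on antisymmetric matrices. -/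
def accretiveCone (ι : Type*) [Fintype ι] : PointedCone ℝ (Matrix ι ι ℝ) where
  carrier := {M | ∀ x : ι → ℝ, 0 ≤ x ⬝ᵥ (M *ᵥ x)}
  add_mem' hM hN x := by
    rw [add_mulVec, dotProduct_add]
    exact add_nonneg (hM x) (hN x)
  zero_mem' x := by rw [zero_mulVec, dotProduct_zero]
  smul_mem' c M hM x := by
    rw [smul_mulVec, dotProduct_smul]
    exact smul_nonneg c.2 (hM x)

lemma mem_accretiveCone_iff_posSemidef {M : Matrix ι ι ℝ} (hM : M.IsSymm) :
    M ∈ accretiveCone ι ↔ M.PosSemidef :=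
  ⟨fun h => posSemidef_iff_isSymm_and_dotProduct_nonneg.2 ⟨hM, h⟩,
    fun h => (posSemidef_iff_isSymm_and_dotProduct_nonneg.1 h).2⟩

lemma sub_transpose_mem_accretiveCone (N : Matrix ι ι ℝ) : N - Nᵀ ∈ accretiveCone ι := fun x => by
  rw [sub_mulVec, dotProduct_sub, mulVec_transpose, dotProduct_comm x (x ᵥ* N),
    dotProduct_mulVec, sub_self]

lemma posSemidef_of_trace_mul_nonneg {G : Matrix ι ι ℝ}
    (hG : ∀ M ∈ accretiveCone ι, 0 ≤ (G * M).trace) : G.PosSemidef := by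
  refine posSemidef_iff_isSymm_and_dotProduct_nonneg.2 ⟨?_, fun x => ?_⟩
  · refine ext_iff_trace_mul_right.2 fun N => ?_
    have hle := hG _ (sub_transpose_mem_accretiveCone N)
    have hge := hG _ (sub_transpose_mem_accretiveCone Nᵀ)
    rw [transpose_transpose] at hge
    rw [Matrix.mul_sub, trace_sub] at hle hge
    rw [← trace_transpose, transpose_mul, transpose_transpose, trace_mul_comm]
    linarith
  · have h := hG (vecMulVec x x) ((mem_accretiveCone_iff_posSemidef (transpose_vecMulVec x x)).2
      (by simpa using posSemidef_vecMulVec_self_star x))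
    rwa [mul_vecMulVec, trace_vecMulVec, dotProduct_comm] at h

lemma isConeOrderUnit_accretiveCone_of_posDef {P : Matrix ι ι ℝ} (hP : P.PosDef) :
    IsConeOrderUnit (accretiveCone ι) P := by
  classical
  refine ⟨(posSemidef_iff_isSymm_and_dotProduct_nonneg.1 hP.posSemidef).2, fun M => ?_⟩
  have hker : LinearMap.ker P.mulVecLin ≤ LinearMap.ker (1 + Mᵀ * M).mulVecLin := by
    rw [ker_mulVecLin_eq_bot_iff.2 fun v hv => by_contra fun hne => by
      simpa [hv] using hP.dotProduct_mulVec_pos hne]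
    exact bot_le
  have hMM : (1 + Mᵀ * M).PosSemidef := PosSemidef.one.add (by
    simpa only [conjTranspose_eq_transpose_of_trivial] using posSemidef_conjTranspose_mul_self M)
  obtain ⟨c, -, hc⟩ := exists_pos_smul_sub_posSemidef_of_ker_le hP.posSemidef hMM hker
  have hsq : (1 + M)ᵀ * (1 + M) ∈ accretiveCone ι := fun x => by
    rw [dotProduct_transpose_mul_self_mulVec]
    exact Finset.sum_nonneg fun i _ => mul_self_nonneg _
  have hcP := (mem_accretiveCone_iff_posSemidef
    (posSemidef_iff_isSymm_and_dotProduct_nonneg.1 hc).1).2 hc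
  have hdecomp : (c / 2) • P + M =
      (1 / 2 : ℝ) • (c • P - (1 + Mᵀ * M) + (1 + M)ᵀ * (1 + M) + (M - Mᵀ)) := by
    rw [transpose_add, transpose_one, Matrix.add_mul, Matrix.mul_add, Matrix.mul_add,
      Matrix.one_mul, Matrix.one_mul, Matrix.mul_one]
    module
  exact ⟨c / 2, hdecomp ▸ PointedCone.smul_mem _ (by norm_num) (Submodule.add_mem _
    (Submodule.add_mem _ hcP hsq) (sub_transpose_mem_accretiveCone M))⟩

/-- The functional `⟨A, ·⟩ : M ↦ trace (A * M)`. -/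
def tracePairing (A : Matrix ι ι ℝ) : Matrix ι ι ℝ →ₗ[ℝ] ℝ :=
  traceLinearMap ι ℝ ℝ ∘ₗ LinearMap.mulLeft ℝ A

lemma tracePairing_apply (A M : Matrix ι ι ℝ) : tracePairing A M = (A * M).trace := rfl

lemma tracePairing_surjective :
    Function.Surjective (tracePairing : Matrix ι ι ℝ → Matrix ι ι ℝ →ₗ[ℝ] ℝ) := fun g => by
  classical
  refine ⟨.of fun i j => g (single j i 1), ext_linearMap ℝ fun i j => LinearMap.ext_ring ?_⟩
  simp [tracePairing_apply, trace_mul_single]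

end AccretiveCone

section IntrinsicInterior

open Topology

variable {V : Type*} [AddCommGroup V] [Module ℝ V] [TopologicalSpace V]
  [IsTopologicalAddGroup V] [ContinuousSMul ℝ V] {s : Set V} {x x' : V}

lemma exists_pos_add_smul_sub_mem_of_mem_intrinsicInterior (hx : x ∈ intrinsicInterior ℝ s)
    (hx' : x' ∈ s) : ∃ δ : ℝ, 0 < δ ∧ x + δ • (x - x') ∈ s := by
  obtain ⟨z, hz, rfl⟩ := mem_intrinsicInterior.1 hx
  have hmem : ∀ t : ℝ, (z : V) + t • ((z : V) - x') ∈ affineSpan ℝ s := fun t => by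
    simpa [AffineMap.lineMap_apply, ← smul_neg, add_comm] using
      AffineMap.lineMap_mem (-t) z.2 (subset_affineSpan ℝ s hx')
  have hcont : Continuous fun t => (⟨_, hmem t⟩ : affineSpan ℝ s) := by fun_prop
  have hnear : ∀ᶠ t in 𝓝 (0 : ℝ), (⟨_, hmem t⟩ : affineSpan ℝ s) ∈ interior ((↑) ⁻¹' s) :=
    hcont.continuousAt.eventually_mem (isOpen_interior.mem_nhds (by simpa using hz))
  obtain ⟨t, ht, hpos⟩ :=
    ((hnear.filter_mono nhdsWithin_le_nhds).and (self_mem_nhdsWithin (s := Ioi 0))).exists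
  exact ⟨t, hpos, (interior_subset ht : _ ∈ ((↑) ⁻¹' s : Set (affineSpan ℝ s)))⟩

lemma ker_mulVecLin_le_of_mem_intrinsicInterior {ι : Type*} [Fintype ι]
    {f : V →ₗ[ℝ] Matrix ι ι ℝ} (hf : ∀ v ∈ s, (f v).PosSemidef)
    (hx : x ∈ intrinsicInterior ℝ s) (hx' : x' ∈ s) :
    LinearMap.ker (f x).mulVecLin ≤ LinearMap.ker (f x').mulVecLin := by
  obtain ⟨δ, hδ, hz⟩ := exists_pos_add_smul_sub_mem_of_mem_intrinsicInterior hx hx'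
  have hsum : (1 + δ) • f x = δ • f x' + f (x + δ • (x - x')) := by
    rw [map_add, map_smul, map_sub]
    module
  calc LinearMap.ker (f x).mulVecLin ≤ LinearMap.ker ((1 + δ) • f x).mulVecLin := fun v hv => by
        rw [LinearMap.mem_ker, mulVecLin_apply] at hv ⊢
        rw [smul_mulVec, hv, smul_zero]
    _ ≤ LinearMap.ker (f x').mulVecLin :=
        hsum ▸ ker_mulVecLin_smul_add_le (hf x' hx') (hf _ hz) hδ

end IntrinsicInterior

section Feasibility

variable {n m : ℕ} {C Cbar : Matrix (Fin n) (Fin n) ℝ} {A : Fin m → Matrix (Fin n) (Fin n) ℝ}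
  {b : Fin m → ℝ} {ε ε₁ ε₂ : ℝ} {X S S₁ S₂ : Matrix (Fin n) (Fin n) ℝ} {y y₁ y₂ : Fin m → ℝ}

lemma DualFeasible.trace_mul_eq (hS : DualFeasible C Cbar A ε y S) (hX : PrimalFeasible A b X) :
    ((C + ε • Cbar) * X).trace = ∑ i, b i * y i + (S * X).trace := by
  rw [← hS.2.1, Matrix.add_mul, trace_add, Matrix.sum_mul, trace_sum]
  simp only [smul_mul, trace_smul, hX.2.1, smul_eq_mul, mul_comm]

lemma DualFeasible.sum_mul_le_trace_mul (hS : DualFeasible C Cbar A ε y S)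
    (hX : PrimalFeasible A b X) : ∑ i, b i * y i ≤ ((C + ε • Cbar) * X).trace := by
  rw [hS.trace_mul_eq hX]
  exact le_add_of_nonneg_right (trace_mul_nonneg hS.2.2 hX.2.2)

lemma DualFeasible.mem_Eset (hS : DualFeasible C Cbar A ε y S) : ε ∈ Eset C Cbar A b :=
  (EReal.bot_lt_coe (∑ i, b i * y i)).trans_le <| le_sInf <| by
    rintro _ ⟨X, hX, rfl⟩
    exact EReal.coe_le_coe_iff.2 (hS.sum_mul_le_trace_mul hX)

lemma DualFeasible.mem_primalOpt_of_trace_mul_eq_zero (hS : DualFeasible C Cbar A ε y S)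
    (hX : PrimalFeasible A b X) (h : (S * X).trace = 0) : X ∈ PrimalOpt C Cbar A b ε :=
  ⟨hX, fun X' hX' => by
    rw [hS.trace_mul_eq hX, h, add_zero]
    exact hS.sum_mul_le_trace_mul hX'⟩

lemma DualFeasible.mem_dualOpt_of_trace_mul_eq_zero (hS : DualFeasible C Cbar A ε y S)
    (hX : PrimalFeasible A b X) (h : (S * X).trace = 0) : (y, S) ∈ DualOpt C Cbar A b ε :=
  ⟨hS, fun y' S' hS' => by
    rw [← add_zero (∑ i, b i * y i), ← h, ← hS.trace_mul_eq hX]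
    exact hS'.sum_mul_le_trace_mul hX⟩

lemma dualFeasible_iff : DualFeasible C Cbar A ε y S ↔
    S.PosSemidef ∧ S = C + ε • Cbar - ∑ i, y i • A i :=
  ⟨fun h => ⟨h.2.2, eq_sub_of_add_eq' h.2.1⟩, fun h =>
    ⟨(posSemidef_iff_isSymm_and_dotProduct_nonneg.1 h.1).1, by rw [h.2, add_sub_cancel], h.1⟩⟩

lemma DualFeasible.smul_add_smul (h₁ : DualFeasible C Cbar A ε₁ y₁ S₁)
    (h₂ : DualFeasible C Cbar A ε₂ y₂ S₂) {a c : ℝ} (hac : a + c = 1)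
    (hS : (a • S₁ + c • S₂).PosSemidef) :
    DualFeasible C Cbar A (a * ε₁ + c * ε₂) (a • y₁ + c • y₂) (a • S₁ + c • S₂) := by
  refine dualFeasible_iff.2 ⟨hS, ?_⟩
  obtain rfl : a = 1 - c := eq_sub_of_add_eq hac
  have hy : ∑ i, ((1 - c) • y₁ + c • y₂) i • A i =
      (1 - c) • ∑ i, y₁ i • A i + c • ∑ i, y₂ i • A i := by
    simp only [Pi.add_apply, Pi.smul_apply, add_smul, smul_assoc, Finset.sum_add_distrib,
      Finset.smul_sum]
  rw [hy, (dualFeasible_iff.1 h₁).2, (dualFeasible_iff.1 h₂).2]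
  module

lemma DualFeasible.interpolate {δ : ℝ} (hδ : 0 < δ)
    (h₁ : DualFeasible C Cbar A (ε + δ * (ε - ε₂)) y₁ S₁) (h₂ : DualFeasible C Cbar A ε₂ y₂ S₂) :
    DualFeasible C Cbar A ε ((1 + δ)⁻¹ • (y₁ + δ • y₂)) ((1 + δ)⁻¹ • (S₁ + δ • S₂)) := by
  have hne : 1 + δ ≠ 0 := by positivity
  have hpsd : ((1 + δ)⁻¹ • S₁ + ((1 + δ)⁻¹ * δ) • S₂).PosSemidef :=
    (h₁.2.2.smul (by positivity)).add (h₂.2.2.smul (by positivity))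
  have hsum : (1 + δ)⁻¹ + (1 + δ)⁻¹ * δ = 1 := by field_simp
  convert h₁.smul_add_smul h₂ hsum hpsd using 1
  · field_simp
    ring
  · rw [smul_add, smul_smul]
  · rw [smul_add, smul_smul]

lemma convex_setOf_primalFeasible : Convex ℝ {X | PrimalFeasible A b X} := by
  rintro X hX Y hY a c ha hc hac
  refine ⟨(hX.1.smul a).add (hY.1.smul c), fun i => ?_, (hX.2.2.smul ha).add (hY.2.2.smul hc)⟩
  rw [Matrix.mul_add, Matrix.mul_smul, Matrix.mul_smul, trace_add, trace_smul, trace_smul,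
    hX.2.1, hY.2.1, ← add_smul, hac, one_smul]

lemma convex_setOf_dualFeasible :
    Convex ℝ {p : (Fin m → ℝ) × Matrix (Fin n) (Fin n) ℝ | DualFeasible C Cbar A ε p.1 p.2} := by
  rintro p hp q hq a c ha hc hac
  have h := DualFeasible.smul_add_smul hp hq hac ((hp.2.2.smul ha).add (hq.2.2.smul hc))
  rwa [← add_mul, hac, one_mul] at h

lemma convex_setOf_forall_le {V : Type*} [AddCommGroup V] [Module ℝ V] {s : Set V}
    (hs : Convex ℝ s) (f : V →ₗ[ℝ] ℝ) : Convex ℝ {x ∈ s | ∀ x' ∈ s, f x ≤ f x'} := by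
  have : {x ∈ s | ∀ x' ∈ s, f x ≤ f x'} = s ∩ ⋂ x' ∈ s, {x | f x ≤ f x'} := by
    ext x
    simp
  exact this ▸ hs.inter (convex_iInter₂ fun x' _ => convex_halfSpace_le f.isLinear (f x'))

lemma convex_primalOpt : Convex ℝ (PrimalOpt C Cbar A b ε) :=
  convex_setOf_forall_le convex_setOf_primalFeasible (tracePairing (C + ε • Cbar))

lemma convex_dualOpt : Convex ℝ (DualOpt C Cbar A b ε) := by
  have h := convex_setOf_forall_le (convex_setOf_dualFeasible (C := C) (Cbar := Cbar) (A := A)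
    (ε := ε)) (-(dotProductBilin ℝ ℝ b ∘ₗ LinearMap.fst ℝ _ _))
  simpa [DualOpt, dotProduct] using h

end Feasibility

section StrongDuality

variable {n m : ℕ} {D X₀ : Matrix (Fin n) (Fin n) ℝ} {A : Fin m → Matrix (Fin n) (Fin n) ℝ}
  {b y₀ : Fin m → ℝ} {w : ℝ}

lemma PrimalFeasible.exists_trace_mul_eq_of_mem_accretiveCone (hD : D.IsSymm)
    (hA : ∀ i, (A i).IsSymm) {M : Matrix (Fin n) (Fin n) ℝ} (hM : M ∈ accretiveCone (Fin n))
    (hb : ∀ i, (A i * M).trace = b i) :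
    ∃ X, PrimalFeasible A b X ∧ (D * X).trace = (D * M).trace := by
  have htr : ∀ B : Matrix (Fin n) (Fin n) ℝ, B.IsSymm →
      (B * ((1 / 2 : ℝ) • (M + Mᵀ))).trace = (B * M).trace := fun B hB => by
    have hT : (B * Mᵀ).trace = (B * M).trace := by
      rw [← trace_transpose, transpose_mul, transpose_transpose, hB.eq, trace_mul_comm]
    rw [Matrix.mul_smul, Matrix.mul_add, trace_smul, trace_add, hT, smul_eq_mul]
    ring
  have hsymm : ((1 / 2 : ℝ) • (M + Mᵀ)).IsSymm := (isSymm_add_transpose_self M).smul _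
  have hmem : (1 / 2 : ℝ) • (M + Mᵀ) ∈ accretiveCone (Fin n) := by
    have : (1 / 2 : ℝ) • (M + Mᵀ) = M + (1 / 2 : ℝ) • (Mᵀ - Mᵀᵀ) := by
      rw [transpose_transpose]; module
    exact this ▸ Submodule.add_mem _ hM
      (PointedCone.smul_mem _ (by norm_num) (sub_transpose_mem_accretiveCone Mᵀ))
  exact ⟨_, ⟨hsymm, fun i => (htr _ (hA i)).trans (hb i),
    (mem_accretiveCone_iff_posSemidef hsymm).1 hmem⟩, htr D hD⟩

lemma exists_dual_of_isGLB (hD : D.IsSymm) (hA : ∀ i, (A i).IsSymm)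
    (hX₀ : PrimalFeasible A b X₀) (hX₀pos : X₀.PosDef)
    (hw : IsGLB ((fun X => (D * X).trace) '' {X | PrimalFeasible A b X}) w) :
    ∃ y : Fin m → ℝ, (D - ∑ i, y i • A i).PosSemidef ∧ ∑ i, b i * y i = w := by
  have himage : tracePairing D '' {M ∈ accretiveCone (Fin n) |
      ∀ i, tracePairing (A i) M = tracePairing (A i) X₀} =
        (fun X => (D * X).trace) '' {X | PrimalFeasible A b X} := by
    ext r
    constructor
    · rintro ⟨M, ⟨hM, hMA⟩, rfl⟩
      obtain ⟨X, hX, hXM⟩ := PrimalFeasible.exists_trace_mul_eq_of_mem_accretiveCone hD hA hM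
        fun i => (hMA i).trans (hX₀.2.1 i)
      exact ⟨X, hX, hXM⟩
    · rintro ⟨X, hX, rfl⟩
      exact ⟨X, ⟨(mem_accretiveCone_iff_posSemidef hX.1).2 hX.2.2,
        fun i => (hX.2.1 i).trans (hX₀.2.1 i).symm⟩, rfl⟩
  obtain ⟨y, hyK, hyw⟩ := exists_sub_sum_nonneg_of_isGLB
    (isConeOrderUnit_accretiveCone_of_posDef hX₀pos) (himage ▸ hw)
  refine ⟨y, posSemidef_of_trace_mul_nonneg fun M hM => ?_, ?_⟩
  · simpa [tracePairing_apply, Matrix.sub_mul, Matrix.sum_mul, trace_sum] using hyK M hM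
  · simpa [tracePairing_apply, hX₀.2.1, mul_comm] using hyw

lemma exists_primal_of_isLUB (hA : ∀ i, (A i).IsSymm)
    (hy₀ : (D - ∑ i, y₀ i • A i).PosDef)
    (hw : IsLUB ((fun y : Fin m → ℝ => ∑ i, b i * y i) ''
      {y | (D - ∑ i, y i • A i).PosSemidef}) w) :
    ∃ X, PrimalFeasible A b X ∧ (D * X).trace = w := by
  let T : (Fin m → ℝ) →ₗ[ℝ] Matrix (Fin n) (Fin n) ℝ := -Fintype.linearCombination ℝ A
  have hT : ∀ y, D + T y = D - ∑ i, y i • A i := fun y => by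
    simp only [T, LinearMap.neg_apply, Fintype.linearCombination_apply, sub_eq_add_neg]
  have hsymm : ∀ y : Fin m → ℝ, (∑ i, y i • A i).IsSymm := fun y => by
    simp only [IsSymm, transpose_sum, transpose_smul, (hA _).eq]
  have hD : D.IsSymm := by
    have := (posSemidef_iff_isSymm_and_dotProduct_nonneg.1 hy₀.posSemidef).1.add (hsymm y₀)
    rwa [sub_add_cancel] at this
  have hset : {y | D + T y ∈ accretiveCone (Fin n)} =
      {y | (D - ∑ i, y i • A i).PosSemidef} := by
    ext y
    rw [mem_ofPred_eq, hT, mem_accretiveCone_iff_posSemidef (hD.sub (hsymm y)), mem_ofPred_eq]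
  obtain ⟨g, hgK, hgT, hgD⟩ := exists_nonneg_comp_eq_neg_of_isLUB (v₀ := y₀) (T := T)
    (φ := dotProductBilin ℝ ℝ b) (by rw [hT]; exact isConeOrderUnit_accretiveCone_of_posDef hy₀)
    (by rw [hset]; exact hw)
  obtain ⟨X, rfl⟩ := tracePairing_surjective g
  have hX : X.PosSemidef := posSemidef_of_trace_mul_nonneg hgK
  refine ⟨X, ⟨(posSemidef_iff_isSymm_and_dotProduct_nonneg.1 hX).1, fun i => ?_, hX⟩,
    by rw [trace_mul_comm]; exact hgD⟩
  have := LinearMap.congr_fun hgT (Pi.single i 1)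
  simpa [T, tracePairing_apply, trace_mul_comm X] using this

end StrongDuality

/-- The interior point condition for the parametric problem: symmetric data, a strictly feasible
primal solution, and a strictly feasible dual solution for some value of the parameter. -/
structure InteriorPointCondition {n m : ℕ} (C Cbar : Matrix (Fin n) (Fin n) ℝ)
    (A : Fin m → Matrix (Fin n) (Fin n) ℝ) (b : Fin m → ℝ) : Prop where
  Cbar_isSymm : Cbar.IsSymm
  A_isSymm : ∀ i, (A i).IsSymm
  exists_primal : ∃ X, PrimalFeasible A b X ∧ X.PosDef
  exists_dual : ∃ ε y S, DualFeasible C Cbar A ε y S ∧ S.PosDef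

namespace InteriorPointCondition

variable {n m : ℕ} {C Cbar : Matrix (Fin n) (Fin n) ℝ} {A : Fin m → Matrix (Fin n) (Fin n) ℝ}
  {b : Fin m → ℝ} {ε : ℝ} {X S : Matrix (Fin n) (Fin n) ℝ} {y : Fin m → ℝ}

lemma isSymm_objective (h : InteriorPointCondition C Cbar A b) (ε : ℝ) :
    (C + ε • Cbar).IsSymm := by
  obtain ⟨ε₀, y₀, S₀, hS₀, -⟩ := h.exists_dual
  have hsum : (∑ i, y₀ i • A i).IsSymm := by
    simp only [IsSymm, transpose_sum, transpose_smul, (h.A_isSymm _).eq]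
  have hC : C + ε • Cbar = (∑ i, y₀ i • A i) + S₀ + (ε - ε₀) • Cbar := by
    rw [hS₀.2.1]
    module
  exact hC ▸ (hsum.add hS₀.1).add (h.Cbar_isSymm.smul _)

lemma exists_dualFeasible_isGLB (h : InteriorPointCondition C Cbar A b)
    (hε : ε ∈ Eset C Cbar A b) : ∃ y S, DualFeasible C Cbar A ε y S ∧
      IsGLB ((fun X => ((C + ε • Cbar) * X).trace) '' {X | PrimalFeasible A b X})
        (∑ i, b i * y i) := by
  obtain ⟨X₀, hX₀, hX₀pos⟩ := h.exists_primal
  obtain ⟨r, -, hr⟩ := EReal.lt_iff_exists_real_btwn.1 (show ⊥ < vfun C Cbar A b ε from hε)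
  have hbdd : BddBelow ((fun X => ((C + ε • Cbar) * X).trace) '' {X | PrimalFeasible A b X}) := by
    refine ⟨r, ?_⟩
    rintro _ ⟨X, hX, rfl⟩
    exact EReal.coe_le_coe_iff.1 (hr.le.trans (sInf_le ⟨X, hX, rfl⟩))
  obtain ⟨w, hw⟩ := Real.exists_isGLB (Set.Nonempty.image _ ⟨X₀, hX₀⟩) hbdd
  obtain ⟨y, hS, rfl⟩ := exists_dual_of_isGLB (h.isSymm_objective ε) h.A_isSymm hX₀ hX₀pos hw
  exact ⟨y, _, dualFeasible_iff.2 ⟨hS, rfl⟩, hw⟩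

lemma exists_dual_posDef (h : InteriorPointCondition C Cbar A b)
    (hε : ε ∈ interior (Eset C Cbar A b)) : ∃ y S, DualFeasible C Cbar A ε y S ∧ S.PosDef := by
  obtain ⟨ε₀, y₀, S₀, hS₀, hS₀pos⟩ := h.exists_dual
  obtain ⟨δ, hδ, hmem⟩ := exists_pos_add_smul_sub_mem_of_mem_intrinsicInterior
    (interior_subset_intrinsicInterior hε) hS₀.mem_Eset
  obtain ⟨y₁, S₁, hS₁, -⟩ := h.exists_dualFeasible_isGLB hmem
  exact ⟨_, _, hS₁.interpolate hδ hS₀,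
    (PosDef.posSemidef_add hS₁.2.2 (hS₀pos.smul hδ)).smul (by positivity)⟩

lemma exists_complementary (h : InteriorPointCondition C Cbar A b)
    (hε : ε ∈ interior (Eset C Cbar A b)) :
    ∃ X y S, PrimalFeasible A b X ∧ DualFeasible C Cbar A ε y S ∧ (S * X).trace = 0 := by
  obtain ⟨y₀, S₀, hS₀, hS₀pos⟩ := h.exists_dual_posDef hε
  obtain ⟨y, S, hS, hglb⟩ := h.exists_dualFeasible_isGLB (interior_subset hε)
  have hlub : IsLUB ((fun y : Fin m → ℝ => ∑ i, b i * y i) ''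
      {y | (C + ε • Cbar - ∑ i, y i • A i).PosSemidef}) (∑ i, b i * y i) := by
    refine IsGreatest.isLUB ⟨⟨y, ?_, rfl⟩, ?_⟩
    · rw [mem_ofPred_eq, ← (dualFeasible_iff.1 hS).2]
      exact hS.2.2
    · rintro _ ⟨y', hy', rfl⟩
      refine hglb.2 ?_
      rintro _ ⟨X, hX, rfl⟩
      exact (dualFeasible_iff.2 ⟨hy', rfl⟩).sum_mul_le_trace_mul hX
  obtain ⟨X, hX, hval⟩ :=
    exists_primal_of_isLUB h.A_isSymm ((dualFeasible_iff.1 hS₀).2 ▸ hS₀pos) hlub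
  exact ⟨X, y, S, hX, hS, by rw [hS.trace_mul_eq hX] at hval; linarith⟩

lemma mul_eq_zero_of_mem_opt (h : InteriorPointCondition C Cbar A b)
    (hε : ε ∈ interior (Eset C Cbar A b)) (hX : X ∈ PrimalOpt C Cbar A b ε)
    (hS : (y, S) ∈ DualOpt C Cbar A b ε) : S * X = 0 := by
  obtain ⟨X', y', S', hX', hS', hcomp⟩ := h.exists_complementary hε
  have hle : ((C + ε • Cbar) * X).trace ≤ ∑ i, b i * y i :=
    calc ((C + ε • Cbar) * X).trace ≤ ((C + ε • Cbar) * X').trace := hX.2 X' hX'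
      _ = ∑ i, b i * y' i := by rw [hS'.trace_mul_eq hX', hcomp, add_zero]
      _ ≤ ∑ i, b i * y i := hS.2 y' S' hS'
  rw [hS.1.trace_mul_eq hX.1] at hle
  exact mul_eq_zero_of_trace_mul_eq_zero hS.1.2.2 hX.1.2.2
    (le_antisymm (by linarith) (trace_mul_nonneg hS.1.2.2 hX.1.2.2))

end InteriorPointCondition

section MaximallyComplementary

variable {n m : ℕ} {C Cbar : Matrix (Fin n) (Fin n) ℝ} {A : Fin m → Matrix (Fin n) (Fin n) ℝ}
  {b : Fin m → ℝ} {ε ε' : ℝ} {X S S' : Matrix (Fin n) (Fin n) ℝ} {y y' : Fin m → ℝ}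

section Norm

-- Only the topology matters here; `Set.Nonempty.intrinsicInterior` asks for a norm inducing it.
attribute [local instance] Matrix.normedAddCommGroup Matrix.normedSpace

lemma nonempty_intrinsicInterior_primalOpt (h : (PrimalOpt C Cbar A b ε).Nonempty) :
    (intrinsicInterior ℝ (PrimalOpt C Cbar A b ε)).Nonempty :=
  h.intrinsicInterior convex_primalOpt

lemma nonempty_intrinsicInterior_dualOpt (h : (DualOpt C Cbar A b ε).Nonempty) :
    (intrinsicInterior ℝ (DualOpt C Cbar A b ε)).Nonempty :=
  h.intrinsicInterior convex_dualOpt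

end Norm

lemma InteriorPointCondition.exists_maxComp (h : InteriorPointCondition C Cbar A b)
    (hε : ε ∈ interior (Eset C Cbar A b)) : ∃ X y S, MaxComp C Cbar A b ε X y S := by
  obtain ⟨X', y', S', hX', hS', hcomp⟩ := h.exists_complementary hε
  obtain ⟨X, hX⟩ := nonempty_intrinsicInterior_primalOpt
    ⟨_, hS'.mem_primalOpt_of_trace_mul_eq_zero hX' hcomp⟩
  obtain ⟨⟨y, S⟩, hS⟩ := nonempty_intrinsicInterior_dualOpt
    ⟨_, hS'.mem_dualOpt_of_trace_mul_eq_zero hX' hcomp⟩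
  exact ⟨X, y, S, hX, hS⟩

lemma ker_mulVecLin_le_of_mem_intrinsicInterior_dualOpt
    (hS : (y, S) ∈ intrinsicInterior ℝ (DualOpt C Cbar A b ε))
    (hS' : (y', S') ∈ DualOpt C Cbar A b ε) :
    LinearMap.ker S.mulVecLin ≤ LinearMap.ker S'.mulVecLin := by
  have hpsd : ∀ p ∈ DualOpt C Cbar A b ε,
      (LinearMap.snd ℝ (Fin m → ℝ) (Matrix (Fin n) (Fin n) ℝ) p).PosSemidef :=
    fun _ hp => hp.1.2.2
  simpa only [LinearMap.snd_apply] using ker_mulVecLin_le_of_mem_intrinsicInterior hpsd hS hS'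

lemma ker_mulVecLin_eq_of_mem_intrinsicInterior_dualOpt
    (hS : (y, S) ∈ intrinsicInterior ℝ (DualOpt C Cbar A b ε))
    (hS' : (y', S') ∈ intrinsicInterior ℝ (DualOpt C Cbar A b ε)) :
    LinearMap.ker S.mulVecLin = LinearMap.ker S'.mulVecLin :=
  (ker_mulVecLin_le_of_mem_intrinsicInterior_dualOpt hS (intrinsicInterior_subset hS')).antisymm
    (ker_mulVecLin_le_of_mem_intrinsicInterior_dualOpt hS' (intrinsicInterior_subset hS))

lemma DualFeasible.primalOpt_eq (hS : DualFeasible C Cbar A ε y S) (hX : PrimalFeasible A b X)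
    (hSX : S * X = 0) : PrimalOpt C Cbar A b ε = {X' | PrimalFeasible A b X' ∧ S * X' = 0} := by
  ext X'
  refine ⟨fun hX' => ⟨hX'.1, ?_⟩, fun ⟨hX', hSX'⟩ =>
    hS.mem_primalOpt_of_trace_mul_eq_zero hX' (by rw [hSX', trace_zero])⟩
  have hle := hX'.2 X hX
  rw [hS.trace_mul_eq hX, hS.trace_mul_eq hX'.1, hSX, trace_zero] at hle
  exact mul_eq_zero_of_trace_mul_eq_zero hS.2.2 hX'.1.2.2
    (le_antisymm (by linarith) (trace_mul_nonneg hS.2.2 hX'.1.2.2))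

lemma DualFeasible.primalOpt_eq_of_ker_eq (hS : DualFeasible C Cbar A ε y S)
    (hS' : DualFeasible C Cbar A ε' y' S') (hX : PrimalFeasible A b X) (hSX : S * X = 0)
    (hker : LinearMap.ker S.mulVecLin = LinearMap.ker S'.mulVecLin) :
    PrimalOpt C Cbar A b ε = PrimalOpt C Cbar A b ε' := by
  rw [hS.primalOpt_eq hX hSX, hS'.primalOpt_eq hX (mul_eq_zero_of_ker_mulVecLin_le hker.le hSX)]
  ext X'
  exact and_congr_right fun _ => ⟨mul_eq_zero_of_ker_mulVecLin_le hker.le,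
    mul_eq_zero_of_ker_mulVecLin_le hker.ge⟩

end MaximallyComplementary

lemma subsingleton_or_isOpen_of_forall_prolong {s : Set ℝ} (hs : s.OrdConnected)
    (h : ∀ x ∈ s, ∀ y ∈ s, ∃ δ : ℝ, 0 < δ ∧ x + δ * (x - y) ∈ s) :
    s.Subsingleton ∨ IsOpen s := by
  refine or_iff_not_imp_left.2 fun hns => isOpen_iff_mem_nhds.2 fun x hx => ?_
  obtain ⟨y, hy, hyx⟩ := (not_subsingleton_iff.1 hns).exists_ne x
  obtain ⟨δ, hδ, hz⟩ := h x hx y hy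
  rcases hyx.lt_or_gt with hlt | hgt
  · exact Filter.mem_of_superset (Icc_mem_nhds hlt (by nlinarith)) (hs.out hy hz)
  · exact Filter.mem_of_superset (Icc_mem_nhds (by nlinarith) hgt) (hs.out hz hy)

section InvariancySets

variable {n m : ℕ} {C Cbar : Matrix (Fin n) (Fin n) ℝ} {A : Fin m → Matrix (Fin n) (Fin n) ℝ}
  {b : Fin m → ℝ} {ε ε' : ℝ} {X S S' : Matrix (Fin n) (Fin n) ℝ} {y y' : Fin m → ℝ}
  {W : Submodule ℝ (Fin n → ℝ)}

/-- The parameters `ε` for which `(D_ε)` has a feasible slack matrix with kernel exactly `W`. For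
`W = N(ε̄)ᗮ` this is the invariancy set of `ε̄`, up to intersection with `int(E)`. -/
def dualKernelParams (C Cbar : Matrix (Fin n) (Fin n) ℝ)
    (A : Fin m → Matrix (Fin n) (Fin n) ℝ) (W : Submodule ℝ (Fin n → ℝ)) : Set ℝ :=
  {ε | ∃ y S, DualFeasible C Cbar A ε y S ∧ LinearMap.ker S.mulVecLin = W}

lemma dualKernelParams_subset_Eset : dualKernelParams C Cbar A W ⊆ Eset C Cbar A b :=
  fun _ ⟨_, _, hS, _⟩ => hS.mem_Eset

lemma convex_dualKernelParams : Convex ℝ (dualKernelParams C Cbar A W) := by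
  rw [convex_iff_forall_pos]
  rintro ε₁ ⟨y₁, S₁, hS₁, hker₁⟩ ε₂ ⟨y₂, S₂, hS₂, hker₂⟩ a c ha hc hac
  have hcS₂ := hS₂.2.2.smul hc.le
  exact ⟨_, _, hS₁.smul_add_smul hS₂ hac ((hS₁.2.2.smul ha.le).add hcS₂),
    (hker₁ ▸ ker_mulVecLin_smul_add_le hS₁.2.2 hcS₂ ha).antisymm
      (le_ker_mulVecLin_smul_add_smul hker₁.ge hker₂.ge a c)⟩

lemma exists_add_smul_sub_mem_dualKernelParams (hS : DualFeasible C Cbar A ε y S)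
    (hS' : DualFeasible C Cbar A ε' y' S')
    (hker : LinearMap.ker S.mulVecLin = LinearMap.ker S'.mulVecLin) :
    ∃ δ : ℝ, 0 < δ ∧ ε + δ * (ε - ε') ∈ dualKernelParams C Cbar A (LinearMap.ker S.mulVecLin) := by
  obtain ⟨c, hc, hcS⟩ := exists_pos_smul_sub_posSemidef_of_ker_le hS.2.2 hS'.2.2 hker.le
  have hδ : 0 < c⁻¹ := inv_pos.2 hc
  have hdecomp : (1 + c⁻¹) • S + (-c⁻¹) • S' = c⁻¹ • S + c⁻¹ • (c • S - S') := by
    rw [smul_sub, smul_smul, inv_mul_cancel₀ hc.ne']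
    module
  have hpsd := hcS.smul hδ.le
  have hfeas := hS.smul_add_smul hS' (by ring) (hdecomp ▸ (hS.2.2.smul hδ.le).add hpsd)
  have hε : (1 + c⁻¹) * ε + (-c⁻¹) * ε' = ε + c⁻¹ * (ε - ε') := by ring
  exact ⟨c⁻¹, hδ, _, _, hε ▸ hfeas, (hdecomp ▸ ker_mulVecLin_smul_add_le hS.2.2 hpsd hδ).antisymm
    (le_ker_mulVecLin_smul_add_smul le_rfl hker.le (1 + c⁻¹) (-c⁻¹))⟩

lemma subsingleton_or_isOpen_dualKernelParams :
    (dualKernelParams C Cbar A W).Subsingleton ∨ IsOpen (dualKernelParams C Cbar A W) := by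
  refine subsingleton_or_isOpen_of_forall_prolong convex_dualKernelParams.ordConnected ?_
  rintro ε ⟨y, S, hS, rfl⟩ ε' ⟨y', S', hS', hker⟩
  exact exists_add_smul_sub_mem_dualKernelParams hS hS' hker.symm

lemma MaxComp.exists_of_dualFeasible (h : InteriorPointCondition C Cbar A b)
    (hε : ε ∈ interior (Eset C Cbar A b)) (hε' : ε' ∈ interior (Eset C Cbar A b))
    (hXS : MaxComp C Cbar A b ε X y S) (hS' : DualFeasible C Cbar A ε' y' S')
    (hker : LinearMap.ker S'.mulVecLin = LinearMap.ker S.mulVecLin) :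
    ∃ y₁ S₁, MaxComp C Cbar A b ε' X y₁ S₁ ∧
      LinearMap.ker S₁.mulVecLin = LinearMap.ker S.mulVecLin := by
  have hXopt := intrinsicInterior_subset hXS.1
  have hSopt := intrinsicInterior_subset hXS.2
  have hSX : S * X = 0 := h.mul_eq_zero_of_mem_opt hε hXopt hSopt
  have hS'X : S' * X = 0 := mul_eq_zero_of_ker_mulVecLin_le hker.ge hSX
  have hprimal : PrimalOpt C Cbar A b ε = PrimalOpt C Cbar A b ε' :=
    hSopt.1.primalOpt_eq_of_ker_eq hS' hXopt.1 hSX hker.symm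
  have hS'opt : (y', S') ∈ DualOpt C Cbar A b ε' :=
    hS'.mem_dualOpt_of_trace_mul_eq_zero hXopt.1 (by rw [hS'X, trace_zero])
  obtain ⟨⟨y₁, S₁⟩, hS₁⟩ := nonempty_intrinsicInterior_dualOpt ⟨_, hS'opt⟩
  have hS₁X : S₁ * X = 0 :=
    h.mul_eq_zero_of_mem_opt hε' (hprimal ▸ hXopt) (intrinsicInterior_subset hS₁)
  refine ⟨y₁, S₁, ⟨hprimal ▸ hXS.1, hS₁⟩, le_antisymm
    ((ker_mulVecLin_le_of_mem_intrinsicInterior_dualOpt hS₁ hS'opt).trans hker.le) ?_⟩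
  -- `S₁` enters a convex combination with a slack matrix beyond `ε` that is optimal at `ε`.
  obtain ⟨δ, hδ, y₂, S₂, hS₂, hker₂⟩ :=
    exists_add_smul_sub_mem_dualKernelParams hSopt.1 hS' hker.symm
  have hS₁feas := (intrinsicInterior_subset hS₁).1
  have hS₂X : S₂ * X = 0 := mul_eq_zero_of_ker_mulVecLin_le hker₂.ge hSX
  have hTopt := (hS₂.interpolate hδ hS₁feas).mem_dualOpt_of_trace_mul_eq_zero hXopt.1 (by
    simp [Matrix.add_mul, hS₁X, hS₂X])
  calc LinearMap.ker S.mulVecLin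
      ≤ LinearMap.ker ((1 + δ)⁻¹ • (S₂ + δ • S₁)).mulVecLin :=
        ker_mulVecLin_le_of_mem_intrinsicInterior_dualOpt hXS.2 hTopt
    _ ≤ LinearMap.ker S₁.mulVecLin := by
        rw [smul_add, smul_smul, add_comm]
        exact ker_mulVecLin_smul_add_le hS₁feas.2.2 (hS₂.2.2.smul (by positivity)) (by positivity)

lemma InteriorPointCondition.invSet_eq (h : InteriorPointCondition C Cbar A b)
    (hε : ε ∈ interior (Eset C Cbar A b)) (hXS : MaxComp C Cbar A b ε X y S) :
    InvSet C Cbar A b ε =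
      interior (Eset C Cbar A b) ∩ dualKernelParams C Cbar A (LinearMap.ker S.mulVecLin) := by
  have hSsymm := (intrinsicInterior_subset hXS.2).1.1
  ext ε'
  refine and_congr_right fun hε' => ⟨?_, ?_⟩
  · rintro ⟨X₁, y₁, S₁, X₂, y₂, S₂, h₁, h₂, -, hrange⟩
    have hS₁ := (intrinsicInterior_subset h₁.2).1
    have hS₂ := (intrinsicInterior_subset h₂.2).1
    exact ⟨y₁, S₁, hS₁, ((range_mulVecLin_eq_iff_ker_eq hS₁.1 hS₂.1).1 hrange).trans
      (ker_mulVecLin_eq_of_mem_intrinsicInterior_dualOpt h₂.2 hXS.2)⟩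
  · rintro ⟨y', S', hS', hker⟩
    obtain ⟨y₁, S₁, hXS₁, hker₁⟩ := hXS.exists_of_dualFeasible h hε hε' hS' hker
    exact ⟨X, y₁, S₁, X, y, S, hXS₁, hXS, rfl, (range_mulVecLin_eq_iff_ker_eq
      (intrinsicInterior_subset hXS₁.2).1.1 hSsymm).2 hker₁⟩

end InvariancySets

theorem stmt1_general {n m : ℕ} {C Cbar : Matrix (Fin n) (Fin n) ℝ}
    {A : Fin m → Matrix (Fin n) (Fin n) ℝ} {b : Fin m → ℝ}
    (h : InteriorPointCondition C Cbar A b) {εbar : ℝ} (hεbar : εbar ∈ interior (Eset C Cbar A b)) :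
    (∃ a : ℝ, InvSet C Cbar A b εbar = {a}) ∨
      ((InvSet C Cbar A b εbar).Nonempty ∧ IsOpen (InvSet C Cbar A b εbar) ∧
        (InvSet C Cbar A b εbar).OrdConnected) := by
  obtain ⟨X, y, S, hXS⟩ := h.exists_maxComp hεbar
  have hmem : εbar ∈ InvSet C Cbar A b εbar := ⟨hεbar, X, y, S, X, y, S, hXS, hXS, rfl, rfl⟩
  have hInv := h.invSet_eq hεbar hXS
  rcases subsingleton_or_isOpen_dualKernelParams (C := C) (Cbar := Cbar) (A := A)
    (W := LinearMap.ker S.mulVecLin) with hsub | hopen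
  · exact .inl ⟨εbar, (hsub.anti (hInv ▸ inter_subset_right)).eq_singleton_of_mem hmem⟩
  · rw [inter_eq_right.2 (interior_maximal dualKernelParams_subset_Eset hopen)] at hInv
    exact .inr ⟨⟨εbar, hmem⟩, hInv ▸ hopen, hInv ▸ convex_dualKernelParams.ordConnected⟩

/-- every invariancy set is either a singleton or an open interval. -/
theorem stmt1 {n m : ℕ} (C Cbar : Matrix (Fin n) (Fin n) ℝ)
    (A : Fin m → Matrix (Fin n) (Fin n) ℝ) (b : Fin m → ℝ)
    (hSA : StandingAssumptions C Cbar A b)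
    (εbar : ℝ) (hεbar : εbar ∈ interior (Eset C Cbar A b)) :
    (∃ a : ℝ, InvSet C Cbar A b εbar = {a}) ∨
      ((InvSet C Cbar A b εbar).Nonempty ∧ IsOpen (InvSet C Cbar A b εbar) ∧
        (InvSet C Cbar A b εbar).OrdConnected) := by
  obtain ⟨-, hCbar, hA, -, X, y, S, hX, hXpos, hS, hSpos⟩ := hSA
  exact stmt1_general ⟨hCbar, hA, ⟨X, hX, hXpos⟩, 0, y, S, hS, hSpos⟩ hεbar
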